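/- (Generation in degree 1 for arbitrary weights.) Let k be a field of characteristic 0 and let w = (w_1,…,w_n) ∈ ℕⁿ be a weight vector with w_1 + … + w_n even. For every integer m ≥ 1, every element of R_{m·w} is a k-linear combination of products f_1·f_2⋯f_m with each factor f_j ∈ R_w. In other words, the graded ring ⊕_{m≥0} R_{m·w} is generated in degree 1. -/

import Mathlib

/-!
The proof combines the first fundamental theorem for `SL₂` with Kempe's theorem on points on the
line.

*Graph monomials span.* An invariant `f` is killed by the lowering operator `F = ∑ y_c ∂/∂x_c`
(`lower_eq_zero`) and has the same degree `d` in the `x_i` as in the `y_i`. With Cayley's operators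
`Ω_ab = ∂²/∂x_a∂y_b − ∂²/∂x_b∂y_a` one has `∑_{a,b} [ab] Ω_ab f = 2 d (d + 1) f`
(`sum_bracket_cayley`). Each `Ω_ab f` again satisfies these conditions, with `d - 1` in place of
`d`, so in characteristic `0` induction on `d` shows that `f` is a combination of products of
brackets (`Rv_le_span`), and comparing multidegrees restricts these to graphs of the right valence.

*Graph monomials factor.* Write `∑ w_i = 2l`, replace point `i` by a clump of `w_i` points, and split
the resulting `2l` points into two halves. A graph of valence `m·w` lifts to an `m`-regular graph on
the `2l` points (`exists_lift`). It has as many edges inside the left half as inside the right half,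
and the Plücker relation `[ab][cd] = [ac][bd] - [ad][bc]` with `a, b` left and `c, d` right replaces
such a pair by edges between the halves, so its monomial is a combination of monomials of `m`-regular
bipartite graphs (`liftMonomial_mem_bipSpan`). By Hall's theorem such a graph is a sum of `m` perfect
matchings (`exists_matchings`), and a perfect matching on the clump points gives an element of `R_w`.
-/

open MvPolynomial

/-- The polynomial ring `A = k[x_1, y_1, …, x_n, y_n]`: variable `(i, 0)` is `x_i`
and `(i, 1)` is `y_i`. -/
abbrev PtRing (k : Type) [CommRing k] (n : ℕ) := MvPolynomial (Fin n × Fin 2) k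

/-- The bracket `[ab] = x_a y_b − x_b y_a`. -/
noncomputable def bracket (k : Type) [CommRing k] (n : ℕ) (a b : Fin n) : PtRing k n :=
  X (a, 0) * X (b, 1) - X (b, 0) * X (a, 1)

/-- The graph monomial `m_Γ = ∏_{(a,b) ∈ Γ} [ab]` of a directed graph `Γ`,
viewed as a multiset of directed edges. -/
noncomputable def graphMonomial (k : Type) [CommRing k] (n : ℕ)
    (Γ : Multiset (Fin n × Fin n)) : PtRing k n :=
  (Γ.map fun e => bracket k n e.1 e.2).prod

/-- The `k`-algebra endomorphism of `A` induced by a `2×2` matrix `g = ((p,q),(r,s))`: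
`x_i ↦ p·x_i + r·y_i` and `y_i ↦ q·x_i + s·y_i`. -/
noncomputable def subst (k : Type) [CommRing k] (n : ℕ) (g : Matrix (Fin 2) (Fin 2) k) :
    PtRing k n →ₐ[k] PtRing k n :=
  aeval fun p =>
    if p.2 = 0 then C (g 0 0) * X (p.1, 0) + C (g 1 0) * X (p.1, 1)
    else C (g 0 1) * X (p.1, 0) + C (g 1 1) * X (p.1, 1)

/-- The valence vector of a directed graph: the `i`-th entry is the number of edges
(with multiplicity) having `i` as an endpoint. -/
def valence (n : ℕ) (Γ : Multiset (Fin n × Fin n)) : Fin n → ℕ :=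
  fun i => (Γ.map Prod.fst).count i + (Γ.map Prod.snd).count i

/-- `R_v`: the space of `SL₂(k)`-invariant multihomogeneous polynomials of multidegree `v`. -/
noncomputable def Rv (k : Type) [CommRing k] (n : ℕ) (v : Fin n → ℕ) :
    Submodule k (PtRing k n) :=
  (⨅ g : Matrix.SpecialLinearGroup (Fin 2) k,
      LinearMap.ker ((subst k n (g : Matrix (Fin 2) (Fin 2) k)).toLinearMap
        - (LinearMap.id : PtRing k n →ₗ[k] PtRing k n))) ⊓
  weightedHomogeneousSubmodule k (fun p : Fin n × Fin 2 => Finsupp.single p.1 1)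
    (Finsupp.equivFunOnFinite.symm v)

/-! ### Lifting graphs and splitting regular bipartite graphs -/

/-- The multiset of all endpoints of the edges of `Γ`, with multiplicity. -/
def endpoints {V : Type*} (Γ : Multiset (V × V)) : Multiset V :=
  Γ.map Prod.fst + Γ.map Prod.snd

lemma endpoints_cons {V : Type*} (e : V × V) (Γ : Multiset (V × V)) :
    endpoints (e ::ₘ Γ) = e.1 ::ₘ e.2 ::ₘ endpoints Γ := by
  simp only [endpoints, Multiset.map_cons, Multiset.cons_add, Multiset.add_cons]
  rw [Multiset.cons_swap]

/-- A graph on `W` lifts along `u : V → W` to a graph on `V` with any prescribed multiset of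
endpoints that maps onto the endpoints of the original graph. -/
lemma exists_lift {V W : Type*} (u : V → W) (Γ : Multiset (W × W)) :
    ∀ T : Multiset V, T.map u = endpoints Γ →
      ∃ Δ : Multiset (V × V), Δ.map (Prod.map u u) = Γ ∧ endpoints Δ = T := by
  classical
  induction Γ using Multiset.induction_on with
  | empty =>
    intro T hT
    refine ⟨0, rfl, ?_⟩
    simpa [endpoints, eq_comm] using hT
  | cons e Γ ih =>
    intro T hT
    rw [endpoints_cons] at hT
    obtain ⟨a, ha, hae, hT⟩ := (Multiset.map_eq_cons u T _ _).2 hT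
    obtain ⟨b, hb, hbe, hT⟩ := (Multiset.map_eq_cons u _ _ _).2 hT
    obtain ⟨Δ, h1, h2⟩ := ih _ hT
    refine ⟨(a, b) ::ₘ Δ, ?_, ?_⟩
    · rw [Multiset.map_cons, h1]
      simp [hae, hbe]
    · rw [endpoints_cons, h2]
      simp [Multiset.cons_erase hb, Multiset.cons_erase ha]

/-- A regular bipartite multigraph of positive valence contains a perfect matching (Hall). -/
lemma exists_perfect_matching {L R : Type*} [Fintype L] [Fintype R]
    (hLR : Fintype.card L = Fintype.card R) (m : ℕ) (Γ : Multiset (L × R))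
    (h1 : Γ.map Prod.fst = (m + 1) • (Finset.univ : Finset L).val)
    (h2 : Γ.map Prod.snd = (m + 1) • (Finset.univ : Finset R).val) :
    ∃ f : L → R, Function.Bijective f ∧
      (Finset.univ : Finset L).val.map (fun l => (l, f l)) ≤ Γ := by
  classical
  have c1 : ∀ S : Finset L, (Γ.filter (fun e => e.1 ∈ S)).card = (m + 1) * S.card := by
    intro S
    have := congrArg (fun T => (T.filter (fun x => x ∈ S)).card) h1
    simp only [Multiset.filter_map, Multiset.card_map, Multiset.filter_nsmul,
      Multiset.card_nsmul] at this
    simpa [← Finset.filter_val] using this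
  have c2 : ∀ S : Finset R, (Γ.filter (fun e => e.2 ∈ S)).card = (m + 1) * S.card := by
    intro S
    have := congrArg (fun T => (T.filter (fun x => x ∈ S)).card) h2
    simp only [Multiset.filter_map, Multiset.card_map, Multiset.filter_nsmul,
      Multiset.card_nsmul] at this
    simpa [← Finset.filter_val] using this
  -- Hall's condition: the `(m + 1) * #S` edges leaving `S` are among the `(m + 1) * #N(S)` edges
  -- meeting its set of neighbours `N(S)`.
  obtain ⟨f, hf, hfm⟩ := (Finset.all_card_le_biUnion_card_iff_exists_injective
    (fun l : L => Finset.univ.filter (fun r : R => (l, r) ∈ Γ))).1 (by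
      intro S
      refine le_of_mul_le_mul_left (a := m + 1) ?_ (Nat.succ_pos m)
      rw [← c1, ← c2]
      refine Multiset.card_le_card (Multiset.le_filter.2 ⟨Multiset.filter_le _ _, ?_⟩)
      rintro ⟨l, r⟩ he
      rw [Multiset.mem_filter] at he
      simp only [Finset.mem_biUnion, Finset.mem_filter, Finset.mem_univ, true_and]
      exact ⟨l, he.2, he.1⟩)
  refine ⟨f, (Fintype.bijective_iff_injective_and_card f).2 ⟨hf, hLR⟩, ?_⟩
  rw [Multiset.le_iff_subset]
  · intro e he
    simp only [Multiset.mem_map] at he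
    obtain ⟨l, -, rfl⟩ := he
    simpa using hfm l
  · exact Finset.univ.nodup.map (fun a b h => congrArg Prod.fst h)

/-- An `m`-regular bipartite multigraph is a sum of `m` perfect matchings (König). -/
lemma exists_matchings {L R : Type*} [Fintype L] [Fintype R]
    (hLR : Fintype.card L = Fintype.card R) (m : ℕ) : ∀ (Γ : Multiset (L × R))
    (_ : Γ.map Prod.fst = m • (Finset.univ : Finset L).val)
    (_ : Γ.map Prod.snd = m • (Finset.univ : Finset R).val),
    ∃ M : Fin m → Multiset (L × R), Γ = ∑ j, M j ∧
      ∀ j, (M j).map Prod.fst = (Finset.univ : Finset L).val ∧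
        (M j).map Prod.snd = (Finset.univ : Finset R).val := by
  induction m with
  | zero =>
    intro Γ h1 _
    refine ⟨fun _ => 0, ?_, fun j => j.elim0⟩
    simpa using h1
  | succ m ih =>
    intro Γ h1 h2
    obtain ⟨f, hf, hle⟩ := exists_perfect_matching hLR m Γ h1 h2
    obtain ⟨Δ, rfl⟩ := Multiset.le_iff_exists_add.1 hle
    have e1 : ((Finset.univ : Finset L).val.map (fun l => (l, f l))).map Prod.fst
        = (Finset.univ : Finset L).val := by simp
    have e2 : ((Finset.univ : Finset L).val.map (fun l => (l, f l))).map Prod.snd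
        = (Finset.univ : Finset R).val := by
      rw [Multiset.map_map]
      exact congrArg Finset.val (Finset.map_univ_equiv (Equiv.ofBijective f hf))
    rw [Multiset.map_add, e1, succ_nsmul'] at h1
    rw [Multiset.map_add, e2, succ_nsmul'] at h2
    obtain ⟨M, hM, hMatch⟩ := ih Δ (add_left_cancel h1) (add_left_cancel h2)
    refine ⟨Fin.cons (Finset.univ.val.map (fun l => (l, f l))) M, ?_, ?_⟩
    · rw [Fin.sum_univ_succ]; simp [hM]
    · intro j
      refine Fin.cases ?_ (fun j => ?_) j
      · exact ⟨e1, e2⟩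
      · simpa using hMatch j

/-! ### Reduction to bipartite graphs by Plücker relations -/

lemma bracket_swap (k : Type) [CommRing k] (n : ℕ) (a b : Fin n) :
    bracket k n a b = - bracket k n b a := by
  simp only [bracket]; ring

lemma bracket_plucker (k : Type) [CommRing k] (n : ℕ) (a b c d : Fin n) :
    bracket k n a b * bracket k n c d
      = bracket k n a c * bracket k n b d - bracket k n a d * bracket k n b c := by
  simp only [bracket]; ring

section Bipartite
variable {L R : Type*} (k : Type) [CommRing k] (n : ℕ) (u : L ⊕ R → Fin n)

/-- The image under `u` of the monomial of a graph on the clump points `L ⊕ R`. -/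
noncomputable def liftMonomial (Γ : Multiset ((L ⊕ R) × (L ⊕ R))) : PtRing k n :=
  (Γ.map fun e => bracket k n (u e.1) (u e.2)).prod

/-- The image under `u` of the monomial of a bipartite graph, whose edges all go from `L`
to `R`. -/
noncomputable def bipMonomial (Γ : Multiset (L × R)) : PtRing k n :=
  (Γ.map fun e => bracket k n (u (.inl e.1)) (u (.inr e.2))).prod

/-- The span of the monomials of the bipartite graphs with multiset of endpoints `T`. -/
noncomputable def bipSpan (T : Multiset (L ⊕ R)) : Submodule k (PtRing k n) :=
  Submodule.span k {p | ∃ Γ : Multiset (L × R),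
    (Γ.map Prod.fst).map Sum.inl + (Γ.map Prod.snd).map Sum.inr = T ∧ p = bipMonomial k n u Γ}

lemma bracket_mul_mem_bipSpan (l : L) (r : R) (T : Multiset (L ⊕ R)) (p : PtRing k n)
    (hp : p ∈ bipSpan k n u T) :
    bracket k n (u (.inl l)) (u (.inr r)) * p ∈ bipSpan k n u (.inl l ::ₘ .inr r ::ₘ T) := by
  induction hp using Submodule.span_induction with
  | mem x hx =>
    obtain ⟨Γ, rfl, rfl⟩ := hx
    refine Submodule.subset_span ⟨(l, r) ::ₘ Γ, ?_, ?_⟩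
    · simp only [Multiset.map_cons, Multiset.cons_add, Multiset.add_cons]
      exact Multiset.cons_swap _ _ _
    · simp [bipMonomial]
  | zero => simp
  | add x y _ _ hx hy => rw [mul_add]; exact add_mem hx hy
  | smul c x _ hx => rw [mul_smul_comm]; exact Submodule.smul_mem _ _ hx

/-- A nonempty graph whose endpoints lie equally often in `L` and in `R` has an edge joining the
two sides, or else one edge inside each side. -/
lemma exists_edges (Γ : Multiset ((L ⊕ R) × (L ⊕ R)))
    (h : (endpoints Γ).countP (fun v => v.isLeft) = (endpoints Γ).countP (fun v => v.isRight)) :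
    Γ = 0 ∨ (∃ l r, (.inl l, .inr r) ∈ Γ) ∨ (∃ l r, (.inr r, .inl l) ∈ Γ) ∨
      ((∃ l l', (.inl l, .inl l') ∈ Γ) ∧ (∃ r r', (.inr r, .inr r') ∈ Γ)) := by
  classical
  by_contra! hc
  obtain ⟨h0, h1, h2, h3⟩ := hc
  obtain ⟨⟨a, b⟩, he⟩ := Multiset.exists_mem_of_ne_zero h0
  have key : (∀ e ∈ Γ, e.1.isLeft ∧ e.2.isLeft) ∨ (∀ e ∈ Γ, e.1.isRight ∧ e.2.isRight) := by
    by_cases hl : ∃ l l', ((.inl l, .inl l') : (L ⊕ R) × (L ⊕ R)) ∈ Γ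
    · obtain ⟨l, l', hl⟩ := hl
      left
      rintro ⟨a | a, b | b⟩ he
      · simp
      · exact (h1 _ _ he).elim
      · exact (h2 _ _ he).elim
      · exact (h3 ⟨l, l', hl⟩ _ _ he).elim
    · push Not at hl
      right
      rintro ⟨a | a, b | b⟩ he
      · exact (hl _ _ he).elim
      · exact (h1 _ _ he).elim
      · exact (h2 _ _ he).elim
      · simp
  have ha : a ∈ endpoints Γ := by
    simp only [endpoints, Multiset.mem_add, Multiset.mem_map]; exact Or.inl ⟨_, he, rfl⟩
  rcases key with hk | hk
  · have : (endpoints Γ).countP (fun v => v.isRight) = 0 := by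
      rw [Multiset.countP_eq_zero]
      intro v hv
      simp only [endpoints, Multiset.mem_add, Multiset.mem_map] at hv
      rcases hv with ⟨e, he, rfl⟩ | ⟨e, he, rfl⟩ <;> have := hk e he <;> simp_all
    rw [this, Multiset.countP_eq_zero] at h
    exact h a ha (hk _ he).1
  · have : (endpoints Γ).countP (fun v => v.isLeft) = 0 := by
      rw [Multiset.countP_eq_zero]
      intro v hv
      simp only [endpoints, Multiset.mem_add, Multiset.mem_map] at hv
      rcases hv with ⟨e, he, rfl⟩ | ⟨e, he, rfl⟩ <;> have := hk e he <;> simp_all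
    rw [this, eq_comm, Multiset.countP_eq_zero] at h
    exact h a ha (hk _ he).1

/-- The monomial of a balanced graph is a combination of monomials of bipartite graphs with the
same endpoints: an edge between the two sides can be split off, and the Plücker relation trades an
edge inside `L` together with an edge inside `R` for two edges between the sides. -/
lemma liftMonomial_mem_bipSpan (N : ℕ) : ∀ Γ : Multiset ((L ⊕ R) × (L ⊕ R)), Γ.card = N →
    (endpoints Γ).countP (fun v => v.isLeft) = (endpoints Γ).countP (fun v => v.isRight) →
    liftMonomial k n u Γ ∈ bipSpan k n u (endpoints Γ) := by
  induction N with
  | zero =>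
    intro Γ hΓ _
    rw [Multiset.card_eq_zero] at hΓ
    subst hΓ
    exact Submodule.subset_span ⟨0, by simp [endpoints], by simp [liftMonomial, bipMonomial]⟩
  | succ N ih =>
    intro Γ hΓ hb
    rcases exists_edges Γ hb with h | ⟨l, r, h⟩ | ⟨l, r, h⟩ | ⟨⟨l, l', hl⟩, ⟨r, r', hr⟩⟩
    · simp [h] at hΓ
    · obtain ⟨Δ, rfl⟩ := Multiset.exists_cons_of_mem h
      rw [endpoints_cons] at hb ⊢
      have := bracket_mul_mem_bipSpan k n u l r _ _
        (ih Δ (by simpa using hΓ) (by simpa [Multiset.countP_cons] using hb))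
      simpa [liftMonomial] using this
    · obtain ⟨Δ, rfl⟩ := Multiset.exists_cons_of_mem h
      rw [endpoints_cons] at hb ⊢
      have := neg_mem (bracket_mul_mem_bipSpan k n u l r _ _
        (ih Δ (by simpa using hΓ) (by simpa [Multiset.countP_cons] using hb)))
      rw [Multiset.cons_swap, ← neg_mul, ← bracket_swap] at this
      simpa [liftMonomial] using this
    · obtain ⟨Δ, rfl⟩ := Multiset.exists_cons_of_mem hl
      have hr' : ((.inr r, .inr r') : (L ⊕ R) × (L ⊕ R)) ∈ Δ := by simpa using hr
      obtain ⟨Δ, rfl⟩ := Multiset.exists_cons_of_mem hr'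
      rw [endpoints_cons, endpoints_cons] at hb ⊢
      have i1 := bracket_mul_mem_bipSpan k n u l r _ _
        (ih ((.inl l', .inr r') ::ₘ Δ) (by simpa using hΓ)
          (by rw [endpoints_cons]; simpa [Multiset.countP_cons] using hb))
      have i2 := bracket_mul_mem_bipSpan k n u l r' _ _
        (ih ((.inl l', .inr r) ::ₘ Δ) (by simpa using hΓ)
          (by rw [endpoints_cons]; simpa [Multiset.countP_cons] using hb))
      have e1 : ((.inl l : L ⊕ R) ::ₘ .inr r ::ₘ endpoints ((.inl l', .inr r') ::ₘ Δ)) =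
          .inl l ::ₘ .inl l' ::ₘ .inr r ::ₘ .inr r' ::ₘ endpoints Δ := by
        rw [endpoints_cons, Multiset.cons_swap (Sum.inr r)]
      have e2 : ((.inl l : L ⊕ R) ::ₘ .inr r' ::ₘ endpoints ((.inl l', .inr r) ::ₘ Δ)) =
          .inl l ::ₘ .inl l' ::ₘ .inr r ::ₘ .inr r' ::ₘ endpoints Δ := by
        rw [endpoints_cons, Multiset.cons_swap (Sum.inr r'), Multiset.cons_swap (Sum.inr r')]
      rw [e1] at i1
      rw [e2] at i2
      convert sub_mem i1 i2 using 1
      simp only [liftMonomial, Multiset.map_cons, Multiset.prod_cons]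
      linear_combination (Δ.map fun e => bracket k n (u e.1) (u e.2)).prod *
        bracket_plucker k n (u (.inl l)) (u (.inl l')) (u (.inr r)) (u (.inr r'))

end Bipartite

/-! ### Spanning by graph monomials -/

section Capelli

variable {k : Type} [CommRing k] {n : ℕ}

lemma pderiv_comm' {σ : Type*} (i j : σ) (f : MvPolynomial σ k) :
    pderiv i (pderiv j f) = pderiv j (pderiv i f) := by
  classical
  have h : ⁅(pderiv i : Derivation k (MvPolynomial σ k) (MvPolynomial σ k)),
      (pderiv j : Derivation k (MvPolynomial σ k) (MvPolynomial σ k))⁆ = 0 := by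
    apply MvPolynomial.derivation_ext
    intro l
    rw [Derivation.commutator_apply]
    simp only [pderiv_X, Pi.single_apply]
    split_ifs <;> simp
  have := congrArg (fun D => D f) h
  rw [Derivation.commutator_apply] at this
  exact sub_eq_zero.1 this

/-- The lowering operator `∑ y_c ∂/∂x_c` of `sl₂`. -/
noncomputable def lower (f : PtRing k n) : PtRing k n :=
  ∑ c, X (c, 1) * pderiv (c, 0) f

/-- Cayley's operator `∂²/∂x_a∂y_b − ∂²/∂x_b∂y_a`, dual to the bracket `[ab]`. -/
noncomputable def cayley (a b : Fin n) (f : PtRing k n) : PtRing k n :=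
  pderiv (a, 0) (pderiv (b, 1) f) - pderiv (b, 0) (pderiv (a, 1) f)

/-- The weight whose degree is the total degree in the variables `x_i`. -/
def xWeight (n : ℕ) (p : Fin n × Fin 2) : ℕ := if p.2 = 0 then 1 else 0

/-- The weight whose degree is the total degree in the variables `y_i`. -/
def yWeight (n : ℕ) (p : Fin n × Fin 2) : ℕ := if p.2 = 0 then 0 else 1

lemma lower_sub (f g : PtRing k n) : lower (f - g) = lower f - lower g := by
  simp [lower, mul_sub, Finset.sum_sub_distrib]

lemma pderiv_zero_lower (a : Fin n) (f : PtRing k n) :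
    pderiv (a, 0) (lower f) = lower (pderiv (a, 0) f) := by
  simp only [lower, map_sum, pderiv_mul]
  refine Finset.sum_congr rfl fun c _ => ?_
  rw [pderiv_X_of_ne (by simp), pderiv_comm']
  ring

lemma pderiv_one_lower (a : Fin n) (f : PtRing k n) :
    pderiv (a, 1) (lower f) = lower (pderiv (a, 1) f) + pderiv (a, 0) f := by
  classical
  simp only [lower, map_sum, pderiv_mul, Finset.sum_add_distrib, pderiv_X, Pi.single_apply]
  have h : ∑ c, X (c, 1) * pderiv (a, 1) (pderiv (c, 0) f)
      = ∑ c, X (c, 1) * pderiv (c, 0) (pderiv (a, 1) f) :=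
    Finset.sum_congr rfl fun c _ => by rw [pderiv_comm']
  rw [h]
  simp [add_comm]

lemma lower_cayley (a b : Fin n) (f : PtRing k n) (hf : lower f = 0) :
    lower (cayley a b f) = 0 := by
  have h (c : Fin n) : lower (pderiv (c, 1) f) = - pderiv (c, 0) f := by
    have := pderiv_one_lower c f
    rw [hf, map_zero] at this
    linear_combination -this
  rw [cayley, lower_sub, ← pderiv_zero_lower, ← pderiv_zero_lower, h, h, map_neg, map_neg,
    pderiv_comm' (a, 0) (b, 0) f, sub_self]

lemma euler_x {f : PtRing k n} {d : ℕ} (h : IsWeightedHomogeneous (xWeight n) f d) :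
    ∑ a, X (a, 0) * pderiv (a, 0) f = d • f := by
  rw [← h.sum_weight_X_mul_pderiv, Fintype.sum_prod_type]
  simp [xWeight]

lemma euler_y {f : PtRing k n} {d : ℕ} (h : IsWeightedHomogeneous (yWeight n) f d) :
    ∑ a, X (a, 1) * pderiv (a, 1) f = d • f := by
  rw [← h.sum_weight_X_mul_pderiv, Fintype.sum_prod_type]
  simp [yWeight]

/-- The Capelli-type identity `∑ [ab] Ω_ab = 2 (P_x P_y + P_x - E F)`, where `P_x`, `P_y` are the
Euler operators and `E`, `F` the raising and lowering operators, evaluated on a polynomial killed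
by `F` on which `P_x` and `P_y` act as `d`. -/
lemma sum_bracket_cayley {f : PtRing k n} {d : ℕ} (hx : IsWeightedHomogeneous (xWeight n) f d)
    (hy : IsWeightedHomogeneous (yWeight n) f d) (hf : lower f = 0) :
    ∑ a, ∑ b, bracket k n a b * cayley a b f = (2 * (d * (d + 1)) : ℕ) • f := by
  have h1 : ∑ a, ∑ b, X (a, 0) * X (b, 1) * pderiv (a, 0) (pderiv (b, 1) f) = (d * d) • f := by
    rw [mul_smul, ← euler_x hx, Finset.smul_sum]
    refine Finset.sum_congr rfl fun a _ => ?_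
    rw [← mul_smul_comm, ← map_nsmul, ← euler_y hy, map_sum, Finset.mul_sum]
    refine Finset.sum_congr rfl fun b _ => ?_
    rw [pderiv_mul, pderiv_X_of_ne (by simp)]
    ring
  have h2 : ∑ a, ∑ b, X (a, 0) * X (b, 1) * pderiv (b, 0) (pderiv (a, 1) f) = - (d • f) := by
    rw [← euler_x hx, ← Finset.sum_neg_distrib]
    refine Finset.sum_congr rfl fun a _ => ?_
    have := pderiv_one_lower a f
    rw [hf, map_zero, lower] at this
    rw [← mul_neg, ← eq_neg_of_add_eq_zero_left this.symm, Finset.mul_sum]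
    exact Finset.sum_congr rfl fun b _ => by ring
  have h3 : ∑ a, ∑ b, X (a, 0) * X (b, 1) * cayley a b f = (d * d) • f + d • f := by
    simp only [cayley, mul_sub, Finset.sum_sub_distrib, h1, h2]
    ring
  have h4 : ∑ a, ∑ b, bracket k n a b * cayley a b f =
      ∑ a, ∑ b, X (a, 0) * X (b, 1) * cayley a b f
        + ∑ a, ∑ b, X (b, 0) * X (a, 1) * cayley b a f := by
    simp only [← Finset.sum_add_distrib]
    refine Finset.sum_congr rfl fun a _ => Finset.sum_congr rfl fun b _ => ?_
    simp only [bracket, cayley]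
    ring
  rw [h4, Finset.sum_comm (f := fun a b => X (b, 0) * X (a, 1) * cayley b a f), h3]
  simp only [nsmul_eq_mul]
  push_cast
  ring

lemma isWeightedHomogeneous_cayley_x {f : PtRing k n} {d : ℕ} (a b : Fin n)
    (hx : IsWeightedHomogeneous (xWeight n) f (d + 1)) :
    IsWeightedHomogeneous (xWeight n) (cayley a b f) d :=
  ((hx.pderiv (n' := d + 1) (by simp [xWeight])).pderiv (by simp [xWeight])).sub
    ((hx.pderiv (n' := d + 1) (by simp [xWeight])).pderiv (by simp [xWeight]))

lemma isWeightedHomogeneous_cayley_y {f : PtRing k n} {d : ℕ} (a b : Fin n)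
    (hx : IsWeightedHomogeneous (yWeight n) f (d + 1)) :
    IsWeightedHomogeneous (yWeight n) (cayley a b f) d :=
  ((hx.pderiv (n' := d) (by simp [yWeight])).pderiv (by simp [yWeight])).sub
    ((hx.pderiv (n' := d) (by simp [yWeight])).pderiv (by simp [yWeight]))

lemma weight_eq (m : Fin n × Fin 2 →₀ ℕ) :
    Finsupp.weight (xWeight n) m = ∑ i, m (i, 0) ∧
      Finsupp.weight (yWeight n) m = ∑ i, m (i, 1) := by
  constructor <;>
  · rw [Finsupp.weight_apply, Finsupp.sum_fintype _ _ (by simp), Fintype.sum_prod_type]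
    simp [xWeight, yWeight]

end Capelli

section FirstFundamentalTheorem

variable {k : Type} [Field k] {n : ℕ}

/-- By induction on `d`: Cayley's operators preserve the hypotheses while lowering `d`, and the
Capelli-type identity recovers `f` from the polynomials `Ω_ab f`. -/
theorem mem_span_graphMonomial [CharZero k] (d : ℕ) : ∀ {f : PtRing k n}
    (_ : IsWeightedHomogeneous (xWeight n) f d) (_ : IsWeightedHomogeneous (yWeight n) f d)
    (_ : lower f = 0), f ∈ Submodule.span k (Set.range (graphMonomial k n)) := by
  induction d with
  | zero =>
    intro f hx hy _
    have : f = (coeff 0 f) • graphMonomial k n 0 := by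
      ext m
      by_cases hm : m = 0
      · simp [hm, graphMonomial, coeff_one]
      · have : coeff m f = 0 := by
          by_contra hc
          have h1 := hx hc
          have h2 := hy hc
          rw [(weight_eq m).1] at h1
          rw [(weight_eq m).2] at h2
          apply hm
          ext ⟨i, j⟩
          simp only [Finset.sum_eq_zero_iff, Finset.mem_univ, true_imp_iff] at h1 h2
          fin_cases j
          · exact h1 i
          · exact h2 i
        rw [this]
        simp [graphMonomial, coeff_one, Ne.symm hm]
    rw [this]
    exact Submodule.smul_mem _ _ (Submodule.subset_span ⟨0, rfl⟩)
  | succ d ih =>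
    intro f hx hy hf
    have hsum := sum_bracket_cayley hx hy hf
    have hc : ((2 * ((d + 1) * (d + 1 + 1)) : ℕ) : k) ≠ 0 := by
      rw [Nat.cast_ne_zero]; positivity
    rw [← Nat.cast_smul_eq_nsmul k] at hsum
    rw [← inv_smul_smul₀ hc f, ← hsum]
    refine Submodule.smul_mem _ _ (Submodule.sum_mem _ fun a _ => Submodule.sum_mem _ fun b _ => ?_)
    have := ih (isWeightedHomogeneous_cayley_x a b hx) (isWeightedHomogeneous_cayley_y a b hy)
      (lower_cayley a b f hf)
    generalize cayley a b f = g at this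
    induction this using Submodule.span_induction with
    | mem x hx =>
      obtain ⟨Γ, rfl⟩ := hx
      exact Submodule.subset_span ⟨(a, b) ::ₘ Γ, by simp [graphMonomial]⟩
    | zero => simp
    | add x y _ _ hx hy => rw [mul_add]; exact add_mem hx hy
    | smul c x _ hx => rw [mul_smul_comm]; exact Submodule.smul_mem _ _ hx

/-- Invariance under the unipotent substitutions `x_i ↦ x_i + t y_i` gives its infinitesimal form:
`f(x + T y, y)` agrees with `f` at infinitely many values of `T`, so it is constant in `T`, and its
derivative at `T = 0` is `lower f`. -/
lemma lower_eq_zero [CharZero k] {f : PtRing k n}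
    (h : ∀ t : k, subst k n !![1, 0; t, 1] f = f) : lower f = 0 := by
  let Φ : PtRing k n →ₐ[k] Polynomial (PtRing k n) := aeval fun p =>
    if p.2 = 0 then Polynomial.C (X (p.1, 0)) + Polynomial.X * Polynomial.C (X (p.1, 1))
    else Polynomial.C (X (p.1, 1))
  have hev (t : k) (g : PtRing k n) : (Φ g).eval (C t) = subst k n !![1, 0; t, 1] g := by
    induction g using MvPolynomial.induction_on with
    | C a =>
      simp [Φ, subst, algHom_C,
        IsScalarTower.algebraMap_apply k (PtRing k n) (Polynomial (PtRing k n))]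
    | add p q hp hq => simp [hp, hq]
    | mul_X p i hp =>
      rw [map_mul, Polynomial.eval_mul, hp, map_mul]
      congr 1
      simp only [Φ, subst, aeval_X]
      split_ifs <;> simp [mul_comm (C t)]
  have hconst : Φ f = Polynomial.C f := by
    apply Polynomial.eq_of_infinite_eval_eq
    refine (Set.infinite_range_of_injective (C_injective (Fin n × Fin 2) k)).mono ?_
    rintro _ ⟨t, rfl⟩
    simp [hev, h]
  have hder (g : PtRing k n) :
      (Φ g).eval 0 = g ∧ (Polynomial.derivative (Φ g)).eval 0 = lower g := by
    induction g using MvPolynomial.induction_on with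
    | C a =>
      simp [Φ, lower, algHom_C,
        IsScalarTower.algebraMap_apply k (PtRing k n) (Polynomial (PtRing k n))]
    | add p q hp hq => simp [hp, hq, lower, mul_add, Finset.sum_add_distrib]
    | mul_X p i hp =>
      obtain ⟨i, j⟩ := i
      have e : Φ (X (i, j)) = if j = 0 then
        Polynomial.C (X (i, 0)) + Polynomial.X * Polynomial.C (X (i, 1)) else Polynomial.C (X (i, 1)) := by simp [Φ]
      have hl : lower (p * X (i, j) : PtRing k n) = lower p * X (i, j) + p * lower (X (i, j)) := by
        simp only [lower, pderiv_mul, Finset.sum_mul, Finset.mul_sum, ← Finset.sum_add_distrib]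
        exact Finset.sum_congr rfl fun c _ => by ring
      have hX : lower (X (i, j) : PtRing k n) = if j = 0 then X (i, 1) else 0 := by
        classical
        fin_cases j <;> simp [lower, pderiv_X, Pi.single_apply]
      rw [hl, hX, map_mul, Polynomial.derivative_mul, e]
      fin_cases j <;> simp [hp]
  rw [← (hder f).2, hconst]
  simp

lemma coeff_subst_diag (s t : k) (f : PtRing k n) (m : Fin n × Fin 2 →₀ ℕ) :
    coeff m (subst k n !![s, 0; 0, t] f)
      = s ^ (∑ i, m (i, 0)) * t ^ (∑ i, m (i, 1)) * coeff m f := by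
  have hmon (m' : Fin n × Fin 2 →₀ ℕ) (c : k) : subst k n !![s, 0; 0, t] (monomial m' c) =
      monomial m' (s ^ (∑ i, m' (i, 0)) * t ^ (∑ i, m' (i, 1)) * c) := by
    rw [subst, aeval_monomial, Finsupp.prod_fintype _ _ (by simp), monomial_eq,
      Finsupp.prod_fintype _ _ (by simp), Fintype.prod_prod_type, Fintype.prod_prod_type]
    simp only [Fin.prod_univ_two, C_mul, Finset.prod_mul_distrib,
      ← Finset.prod_pow_eq_pow_sum]
    simp [mul_pow, Finset.prod_mul_distrib, algebraMap_eq]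
    ring
  induction f using MvPolynomial.induction_on' with
  | monomial m' c =>
    rw [hmon, coeff_monomial, coeff_monomial]
    split_ifs with h
    · rw [h]
    · simp
  | add p q hp hq => rw [map_add, coeff_add, hp, hq, coeff_add]; ring

lemma subst_of_mem_Rv {v : Fin n → ℕ} {f : PtRing k n} (hf : f ∈ Rv k n v)
    (g : Matrix (Fin 2) (Fin 2) k) (hg : g.det = 1) : subst k n g f = f := by
  have h := hf.1
  rw [SetLike.mem_coe, Submodule.mem_iInf] at h
  have := h ⟨g, hg⟩
  rw [LinearMap.mem_ker, LinearMap.sub_apply, sub_eq_zero] at this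
  exact this

lemma sum_of_weight {v : Fin n → ℕ} {m : Fin n × Fin 2 →₀ ℕ}
    (h : Finsupp.weight (fun p : Fin n × Fin 2 => Finsupp.single p.1 1) m
      = Finsupp.equivFunOnFinite.symm v) :
    ∑ i, m (i, 0) + ∑ i, m (i, 1) = ∑ i, v i := by
  rw [← Finset.sum_add_distrib]
  refine Finset.sum_congr rfl fun i _ => ?_
  have := DFunLike.congr_fun h i
  rw [Finsupp.weight_apply, Finsupp.sum_fintype _ _ (by simp), Fintype.sum_prod_type] at this
  simpa [Finsupp.finsetSum_apply, Finsupp.single_apply, Finset.sum_add_distrib] using this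

/-- First fundamental theorem for `SL₂`: the torus element `diag(2, 1/2)` forces equal degrees in
the `x_i` and in the `y_i`, and the unipotent elements force `lower f = 0`. -/
theorem Rv_le_span [CharZero k] {v : Fin n → ℕ} {f : PtRing k n} (hf : f ∈ Rv k n v) :
    f ∈ Submodule.span k (Set.range (graphMonomial k n)) := by
  have hcoeff : ∀ m, coeff m f ≠ 0 → ∑ i, m (i, 0) = ∑ i, m (i, 1) := by
    intro m hm
    have h := coeff_subst_diag (2 : k) 2⁻¹ f m
    rw [subst_of_mem_Rv hf _ (by simp [Matrix.det_fin_two])] at h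
    have h' : (2 : k) ^ (∑ i, m (i, 0)) = 2 ^ (∑ i, m (i, 1)) := by
      have := mul_right_cancel₀ hm ((one_mul _).trans h)
      rw [inv_pow] at this
      field_simp at this
      exact this.symm
    have h2 : 2 ^ (∑ i, m (i, 0)) = 2 ^ (∑ i, m (i, 1)) := by exact_mod_cast h'
    exact Nat.pow_right_injective le_rfl h2
  refine mem_span_graphMonomial ((∑ i, v i) / 2) ?_ ?_
    (lower_eq_zero fun t => subst_of_mem_Rv hf _ (by simp [Matrix.det_fin_two]))
  · intro m hm
    have h1 := hcoeff m hm
    have h2 := sum_of_weight (hf.2 hm)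
    rw [(weight_eq m).1]
    omega
  · intro m hm
    have h1 := hcoeff m hm
    have h2 := sum_of_weight (hf.2 hm)
    rw [(weight_eq m).2]
    omega

end FirstFundamentalTheorem

/-! ### Multidegrees and factorisation into matchings -/

section Factorisation

variable {k : Type} [Field k] {n : ℕ}

/-- The weight in `ℕⁿ` whose degree is the multidegree: `x_i` and `y_i` have degree `e_i`. -/
noncomputable abbrev multiWeight (n : ℕ) (p : Fin n × Fin 2) : Fin n →₀ ℕ := Finsupp.single p.1 1

lemma isWeightedHomogeneous_bracket (a b : Fin n) :
    IsWeightedHomogeneous (multiWeight n) (bracket k n a b)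
      (Finsupp.single a 1 + Finsupp.single b 1) := by
  refine IsWeightedHomogeneous.sub
    ((isWeightedHomogeneous_X k _ _).mul (isWeightedHomogeneous_X k _ _)) ?_
  rw [add_comm]
  exact (isWeightedHomogeneous_X k _ _).mul (isWeightedHomogeneous_X k _ _)

lemma subst_bracket (g : Matrix (Fin 2) (Fin 2) k) (hg : g.det = 1) (a b : Fin n) :
    subst k n g (bracket k n a b) = bracket k n a b := by
  rw [Matrix.det_fin_two] at hg
  have hg' : C (g 0 0) * C (g 1 1) - C (g 0 1) * C (g 1 0) = (1 : PtRing k n) := by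
    rw [← C_mul, ← C_mul, ← C_sub, hg, C_1]
  simp only [subst, bracket, map_sub, map_mul, aeval_X]
  simp only [if_true, one_ne_zero, if_false]
  linear_combination (X (a, 0) * X (b, 1) - X (b, 0) * X (a, 1)) * hg'

lemma isWeightedHomogeneous_graphMonomial (Γ : Multiset (Fin n × Fin n)) :
    IsWeightedHomogeneous (multiWeight n) (graphMonomial k n Γ)
      (Multiset.toFinsupp (endpoints Γ)) := by
  induction Γ using Multiset.induction_on with
  | empty => simpa [graphMonomial, endpoints] using isWeightedHomogeneous_one k (multiWeight n)
  | cons e Γ ih =>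
    have : Multiset.toFinsupp (endpoints (e ::ₘ Γ)) = (Finsupp.single e.1 1 + Finsupp.single e.2 1)
        + Multiset.toFinsupp (endpoints Γ) := by
      rw [endpoints_cons, ← Multiset.singleton_add, ← Multiset.singleton_add, map_add, map_add,
        Multiset.toFinsupp_singleton, Multiset.toFinsupp_singleton, add_assoc]
    rw [this]
    simpa [graphMonomial] using (isWeightedHomogeneous_bracket e.1 e.2).mul ih

lemma subst_graphMonomial (g : Matrix (Fin 2) (Fin 2) k) (hg : g.det = 1)
    (Γ : Multiset (Fin n × Fin n)) :
    subst k n g (graphMonomial k n Γ) = graphMonomial k n Γ := by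
  simp [graphMonomial, map_multiset_prod, Multiset.map_map, subst_bracket g hg]

lemma graphMonomial_mem_Rv (Γ : Multiset (Fin n × Fin n)) (v : Fin n → ℕ)
    (hv : ∀ i, (endpoints Γ).count i = v i) : graphMonomial k n Γ ∈ Rv k n v := by
  refine ⟨?_, ?_⟩
  · rw [SetLike.mem_coe, Submodule.mem_iInf]
    intro g
    rw [LinearMap.mem_ker, LinearMap.sub_apply, sub_eq_zero]
    exact subst_graphMonomial _ g.2 Γ
  · have : Multiset.toFinsupp (endpoints Γ) = Finsupp.equivFunOnFinite.symm v := by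
      ext i; simp [hv]
    have h := isWeightedHomogeneous_graphMonomial (k := k) Γ
    rw [this] at h
    exact h

/-- Projecting to the component of multidegree `v` keeps exactly the graph monomials with
valence `v`. -/
theorem Rv_le_span_valence [CharZero k] {v : Fin n → ℕ} {f : PtRing k n} (hf : f ∈ Rv k n v) :
    f ∈ Submodule.span k
      {p | ∃ Γ, (∀ i, (endpoints Γ).count i = v i) ∧ p = graphMonomial k n Γ} := by
  classical
  have h := Rv_le_span hf
  have hcomp : weightedHomogeneousComponent (multiWeight n)
      (Finsupp.equivFunOnFinite.symm v) f = f :=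
    IsWeightedHomogeneous.weightedHomogeneousComponent_same hf.2
  rw [← hcomp]
  clear hcomp hf
  induction h using Submodule.span_induction with
  | mem x hx =>
    obtain ⟨Γ, rfl⟩ := hx
    by_cases hΓ : Multiset.toFinsupp (endpoints Γ) = Finsupp.equivFunOnFinite.symm v
    · have h := isWeightedHomogeneous_graphMonomial (k := k) Γ
      rw [hΓ] at h
      rw [IsWeightedHomogeneous.weightedHomogeneousComponent_same h]
      exact Submodule.subset_span ⟨Γ, fun i => by simpa using DFunLike.congr_fun hΓ i, rfl⟩
    · rw [(isWeightedHomogeneous_graphMonomial (k := k) Γ).weightedHomogeneousComponent_ne _ (Ne.symm hΓ)]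
      exact zero_mem _
  | zero => simp
  | add x y _ _ hx hy => rw [map_add]; exact add_mem hx hy
  | smul c x _ hx => rw [map_smul]; exact Submodule.smul_mem _ _ hx

/-- Replace the point `i` by a clump of `w i` points, and split all the resulting points into two
halves of equal size; `u` sends each of them back to its clump. -/
lemma exists_clumping (w : Fin n → ℕ) (l : ℕ) (hl : ∑ i, w i = l + l) :
    ∃ u : Fin l ⊕ Fin l → Fin n, ∀ i,
      ((Finset.univ : Finset (Fin l ⊕ Fin l)).val.map u).count i = w i := by
  classical
  let e : Fin l ⊕ Fin l ≃ Σ i, Fin (w i) := Fintype.equivOfCardEq (by simp [hl])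
  refine ⟨fun v => (e v).1, fun i => ?_⟩
  rw [Multiset.count_map, ← Finset.filter_val, ← Finset.card_def, ← Fintype.card_subtype]
  let e' : {v // i = (e v).1} ≃ Fin (w i) :=
    (e.subtypeEquiv (q := fun x => x.1 = i) fun v => eq_comm).trans (Equiv.sigmaSubtype i)
  simpa using Fintype.card_congr e'

lemma univ_sum_val (L R : Type*) [Fintype L] [Fintype R] :
    (Finset.univ : Finset (L ⊕ R)).val = (Finset.univ : Finset L).val.map Sum.inl
      + (Finset.univ : Finset R).val.map Sum.inr := by
  rw [← Finset.univ_disjSum_univ]; rfl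

lemma countP_isLeft_eq {L R : Type*} [Fintype L] [Fintype R]
    (hLR : Fintype.card L = Fintype.card R) (m : ℕ) :
    (m • (Finset.univ : Finset (L ⊕ R)).val).countP (fun v => v.isLeft)
      = (m • (Finset.univ : Finset (L ⊕ R)).val).countP (fun v => v.isRight) := by
  rw [Multiset.countP_nsmul, Multiset.countP_nsmul, univ_sum_val, Multiset.countP_add,
    Multiset.countP_add]
  simp [Multiset.countP_map, hLR]

/-- The monomial of an `m`-regular bipartite graph on the clump points is a product of `m` monomials
of perfect matchings, each of which has multidegree `w`. -/
lemma bipMonomial_mem {L R : Type*} [Fintype L] [Fintype R]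
    (hLR : Fintype.card L = Fintype.card R) (u : L ⊕ R → Fin n) (w : Fin n → ℕ)
    (hu : ∀ i, ((Finset.univ : Finset (L ⊕ R)).val.map u).count i = w i)
    (m : ℕ) (Γ : Multiset (L × R))
    (hΓ : (Γ.map Prod.fst).map Sum.inl + (Γ.map Prod.snd).map Sum.inr
      = m • (Finset.univ : Finset (L ⊕ R)).val) :
    ∃ g : Fin m → PtRing k n, (∀ j, g j ∈ Rv k n w) ∧ bipMonomial k n u Γ = ∏ j, g j := by
  classical
  have h1 : Γ.map Prod.fst = m • (Finset.univ : Finset L).val := by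
    ext l
    have := congrArg (Multiset.count (Sum.inl l)) hΓ
    rw [Multiset.count_add, Multiset.count_map_eq_count' _ _ Sum.inl_injective,
      Multiset.count_eq_zero_of_notMem (s := Multiset.map Sum.inr _) (by simp), add_zero] at this
    rw [this]
    simp
  have h2 : Γ.map Prod.snd = m • (Finset.univ : Finset R).val := by
    ext r
    have := congrArg (Multiset.count (Sum.inr r)) hΓ
    rw [Multiset.count_add, Multiset.count_map_eq_count' _ _ Sum.inr_injective,
      Multiset.count_eq_zero_of_notMem (s := Multiset.map Sum.inl _) (by simp), zero_add] at this
    rw [this]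
    simp
  obtain ⟨M, rfl, hM⟩ := exists_matchings hLR m Γ h1 h2
  refine ⟨fun j => bipMonomial k n u (M j), fun j => ?_, ?_⟩
  · have e : bipMonomial k n u (M j) = graphMonomial k n
        ((M j).map fun e => (u (.inl e.1), u (.inr e.2))) := by
      simp [bipMonomial, graphMonomial, Multiset.map_map]
    change bipMonomial k n u (M j) ∈ _
    rw [e]
    refine graphMonomial_mem_Rv _ _ fun i => ?_
    rw [← hu i, univ_sum_val, ← (hM j).1, ← (hM j).2]
    simp [endpoints, Multiset.map_map]
  · have h : ∀ s : Finset (Fin m), bipMonomial k n u (∑ j ∈ s, M j)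
        = ∏ j ∈ s, bipMonomial k n u (M j) := by
      intro s
      induction s using Finset.induction_on with
      | empty => simp [bipMonomial]
      | insert j s hj ih =>
        rw [Finset.sum_insert hj, Finset.prod_insert hj, ← ih]
        simp [bipMonomial]
    exact h _

end Factorisation

/-- Generation in degree 1 for arbitrary weights: if `w_1 + … + w_n` is even, every invariant
of multidegree `m·w` is a linear combination of products of `m` invariants of multidegree `w`. -/
theorem stmt5 (k : Type) [Field k] [CharZero k] (n : ℕ) (w : Fin n → ℕ)
    (hw : Even (∑ i, w i)) (m : ℕ) (hm : 1 ≤ m)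
    (f : PtRing k n) (hf : f ∈ Rv k n fun i => m * w i) :
    f ∈ Submodule.span k
      {p : PtRing k n | ∃ g : Fin m → PtRing k n,
        (∀ j, g j ∈ Rv k n w) ∧ p = ∏ j, g j} := by
  obtain ⟨l, hl⟩ := hw
  obtain ⟨u, hu⟩ := exists_clumping w l hl
  refine (Submodule.span_le.2 ?_ : _ ≤ _) (Rv_le_span_valence hf)
  rintro _ ⟨Γ, hΓ, rfl⟩
  obtain ⟨Δ, rfl, hΔ⟩ := exists_lift u Γ (m • (Finset.univ : Finset (Fin l ⊕ Fin l)).val) (by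
    ext i
    rw [hΓ i, Multiset.map_nsmul, Multiset.count_nsmul, hu i])
  have hbal : (endpoints Δ).countP (fun v => v.isLeft)
      = (endpoints Δ).countP (fun v => v.isRight) := by
    rw [hΔ]
    exact countP_isLeft_eq rfl m
  have h := liftMonomial_mem_bipSpan k n u _ Δ rfl hbal
  have e : graphMonomial k n (Δ.map (Prod.map u u)) = liftMonomial k n u Δ := by
    simp [graphMonomial, liftMonomial, Multiset.map_map]
  rw [SetLike.mem_coe, e]
  refine (Submodule.span_le.2 ?_ : bipSpan k n u (endpoints Δ) ≤ _) h
  rintro _ ⟨Γ', hΓ', rfl⟩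
  rw [hΔ] at hΓ'
  exact Submodule.subset_span (bipMonomial_mem rfl u w hu m Γ' hΓ')
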